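/- Let α ≥ 0. There exists a T-tour of G of cost at most (3/2)·c(x*) + α·c(I_p) + Σ_{C∈𝒩} (x*(C) − 1)·max{1 − (1/2)·x*(C) − α, 0}·c(v^C). -/

import Mathlib

open Finset
open scoped Classical symmDiff

/-- A multigraph on vertex type `V` with edge type `E`, given by the two endpoints
of each edge. -/
structure MultiGraph (V E : Type*) where
  fst : E → V
  snd : E → V

namespace MultiGraph

variable {V E : Type*} [Fintype V] [DecidableEq V] [Fintype E] [DecidableEq E]
variable (G : MultiGraph V E)

/-- The cut `δ(U)`: the set of edges with exactly one endpoint in `U`. -/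
noncomputable def cut (U : Finset V) : Finset E :=
  univ.filter fun e => (G.fst e ∈ U ∧ G.snd e ∉ U) ∨ (G.fst e ∉ U ∧ G.snd e ∈ U)

/-- The degree of `v` with respect to the edge multiset `F`. -/
def deg (F : Multiset E) (v : V) : ℕ :=
  (F.map fun e => (if G.fst e = v then 1 else 0) + (if G.snd e = v then 1 else 0)).sum

/-- `odd(F)`: the set of vertices of odd degree in `(V, F)`. -/
noncomputable def oddVerts (F : Multiset E) : Finset V :=
  univ.filter fun v => Odd (G.deg F v)

/-- Adjacency via an edge satisfying the predicate `P`. -/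
def Adj (P : E → Prop) (a b : V) : Prop :=
  ∃ e, P e ∧ ((G.fst e = a ∧ G.snd e = b) ∨ (G.fst e = b ∧ G.snd e = a))

/-- `(V, {e | P e})` is a connected (spanning) subgraph. -/
def ConnectedOn (P : E → Prop) : Prop :=
  ∀ u w : V, Relation.ReflTransGen (G.Adj P) u w

/-- The graph `G` is connected. -/
def Connected : Prop := G.ConnectedOn fun _ => True

/-- A `T`-tour: a multi-subset `F` of the edges such that `(V, F)` is connected and
`odd(F) = T`. -/
def IsTTour (T : Finset V) (F : Multiset E) : Prop :=
  G.ConnectedOn (· ∈ F) ∧ G.oddVerts F = T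

/-- `S` is the edge set of a spanning tree of `G`. -/
def IsSpanningTree (S : Finset E) : Prop :=
  G.ConnectedOn (· ∈ S) ∧ S.card + 1 = Fintype.card V

/-- `δ(𝒲)`: the set of edges whose endpoints lie in different parts of the
partition `𝒲` of `V`. -/
noncomputable def partitionCut (W : Finpartition (univ : Finset V)) : Finset E :=
  univ.filter fun e => ∀ P ∈ W.parts, ¬(G.fst e ∈ P ∧ G.snd e ∈ P)

/-- Feasibility for the standard LP relaxation of the `T`-tour problem. -/
def LPFeasible (T : Finset V) (x : E → ℝ) : Prop :=
  (∀ e, 0 ≤ x e) ∧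
  (∀ U : Finset V, U.Nonempty → U ≠ univ → Even ((T ∩ U).card) →
    2 ≤ ∑ e ∈ G.cut U, x e) ∧
  (∀ W : Finpartition (univ : Finset V),
    (W.parts.card : ℝ) - 1 ≤ ∑ e ∈ G.partitionCut W, x e)

/-- `C` is a cut of `G`, i.e. `C = δ(U)` for some nonempty proper `U ⊆ V`. -/
def IsCut (C : Finset E) : Prop :=
  ∃ U : Finset V, U.Nonempty ∧ U ≠ univ ∧ C = G.cut U

/-- A narrow cut: a cut `C` with `x(C) < 2`. -/
def Narrow (x : E → ℝ) (C : Finset E) : Prop :=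
  G.IsCut C ∧ ∑ e ∈ C, x e < 2

/-- `𝒩`: the set of narrow cuts. -/
noncomputable def narrowCuts (x : E → ℝ) : Finset (Finset E) :=
  univ.filter fun C => G.Narrow x C

/-- A narrow cut `C` is lonely for `S` if `|S ∩ C| = 1`. -/
def Lonely (x : E → ℝ) (S C : Finset E) : Prop :=
  G.Narrow x C ∧ (S ∩ C).card = 1

/-- `ℒ_S`: the set of lonely cuts of `S`. -/
noncomputable def lonelyCuts (x : E → ℝ) (S : Finset E) : Finset (Finset E) :=
  univ.filter fun C => G.Lonely x S C

/-- `L_S = ∪_{C ∈ ℒ_S} (S ∩ C)`: the set of lonely edges of `S`. -/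
noncomputable def lonelyEdges (x : E → ℝ) (S : Finset E) : Finset E :=
  S.filter fun e => ∃ C, G.Lonely x S C ∧ e ∈ C

/-- The incidence vector `χ^F` of an edge set `F`. -/
def chi (F : Finset E) : E → ℝ := fun e => if e ∈ F then 1 else 0

/-- The vector `v^C = (1/(2 - x(C))) · Σ_{S : C ∈ ℒ_S} p_S · χ^{S ∩ C}`. -/
noncomputable def vC (x : E → ℝ) (p : Finset E → ℝ) (C : Finset E) : E → ℝ :=
  fun e => (1 / (2 - ∑ f ∈ C, x f)) *
    ∑ S : Finset E, (if G.Lonely x S C then p S else 0) * chi (S ∩ C) e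

/-- The modified cost
`c^S(e) = c(e) + 2·(Σ_{C ∈ ℒ_S : e ∈ C} c(S ∩ C) − max_{C ∈ ℒ_S : e ∈ C} c(S ∩ C))`,
where the maximum over the empty set is `0`. -/
noncomputable def modCost (c x : E → ℝ) (S : Finset E) (e : E) : ℝ :=
  c e + 2 * ((∑ C ∈ (G.lonelyCuts x S).filter (fun C => e ∈ C), ∑ f ∈ S ∩ C, c f)
    - (if h : ((G.lonelyCuts x S).filter (fun C => e ∈ C)).Nonempty
        then ((G.lonelyCuts x S).filter (fun C => e ∈ C)).sup' h (fun C => ∑ f ∈ S ∩ C, c f)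
        else 0))

/-- The set of vertices reachable from `v` using edges satisfying `P`. -/
noncomputable def reachSet (P : E → Prop) (v : V) : Finset V :=
  univ.filter fun w => Relation.ReflTransGen (G.Adj P) v w

end MultiGraph

namespace MultiGraph

/-!
Average over the trees `S`. The parities of `S` are corrected by a cheapest edge set with odd
vertices `odd(S) △ T`, whose cost is at most that of any fractional vector `z ≥ 0` with
`z(δ(U)) ≥ 1` whenever `|U ∩ (odd(S) △ T)|` is odd. One may take
`z = x* / 2 + α χ^{I_S} + ∑ max{1 - x*(C) / 2 - α, 0} v^C`, summed over the narrow cuts `C` that are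
not lonely for `S`: a narrow cut in question meets `S` in an even number of edges and `I_S` in an
odd number, so it is not lonely, and `v^C(C) ≥ 1`. A narrow cut `C` fails to be lonely with
probability at most `x*(C) - 1`, which gives the bound in expectation.

The bound on the cost of joins is proved by lowering the edge costs along cuts. Let `B` be the set
of vertices joined to `b` by free edges, where `a`, `b` are chosen such that the cheapest joins
after flipping the parities at `a` and `b` are as cheap as possible. A cheapest join crosses `B` at
most once, so a small decrease of all costs in `δ(B)` lowers the cost of a cheapest join by at most
that amount.
-/

section Cuts

variable {V E : Type*} (G : MultiGraph V E)

lemma mem_cut [DecidableEq V] [Fintype E] {U : Finset V} {e : E} :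
    e ∈ G.cut U ↔ (G.fst e ∈ U ∧ G.snd e ∉ U) ∨ (G.fst e ∉ U ∧ G.snd e ∈ U) := by
  simp only [cut, mem_filter, mem_univ, true_and]

lemma cut_compl [Fintype V] [DecidableEq V] [Fintype E] (U : Finset V) :
    G.cut Uᶜ = G.cut U := by
  ext e
  simp only [mem_cut, mem_compl]
  tauto

lemma cut_empty [DecidableEq V] [Fintype E] : G.cut ∅ = ∅ := by
  ext e
  simp [mem_cut]

lemma cut_univ [Fintype V] [DecidableEq V] [Fintype E] : G.cut univ = ∅ := by
  ext e
  simp [mem_cut]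

lemma mem_iff_mem_of_reflTransGen [DecidableEq V] [Fintype E] {P : E → Prop} {U : Finset V}
    {u w : V} (hP : ∀ e, P e → e ∉ G.cut U) (h : Relation.ReflTransGen (G.Adj P) u w) :
    u ∈ U ↔ w ∈ U := by
  induction h with
  | refl => rfl
  | tail _ hadj ih =>
    obtain ⟨e, he, h⟩ := hadj
    have hcut := hP e he
    rw [mem_cut] at hcut
    rcases h with ⟨rfl, rfl⟩ | ⟨rfl, rfl⟩ <;> tauto

lemma ConnectedOn.exists_mem_cut [Fintype V] [DecidableEq V] [Fintype E] {G : MultiGraph V E}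
    {P : E → Prop} (hP : G.ConnectedOn P) {U : Finset V} (hne : U.Nonempty) (huniv : U ≠ univ) :
    ∃ e, P e ∧ e ∈ G.cut U := by
  by_contra! hcon
  obtain ⟨u, hu⟩ := hne
  exact huniv (eq_univ_of_forall fun w =>
    (G.mem_iff_mem_of_reflTransGen hcon (hP u w)).1 hu)

lemma mem_reachSet [Fintype V] {P : E → Prop} {u w : V} :
    w ∈ G.reachSet P u ↔ Relation.ReflTransGen (G.Adj P) u w := by
  simp [reachSet]

lemma not_of_mem_cut_reachSet [Fintype V] [DecidableEq V] [Fintype E] {P : E → Prop} {u : V}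
    {e : E} (he : e ∈ G.cut (G.reachSet P u)) : ¬ P e := by
  intro hPe
  simp only [mem_cut, mem_reachSet] at he
  rcases he with ⟨hfst, hsnd⟩ | ⟨hfst, hsnd⟩
  · exact hsnd (hfst.tail ⟨e, hPe, .inl ⟨rfl, rfl⟩⟩)
  · exact hfst (hsnd.tail ⟨e, hPe, .inr ⟨rfl, rfl⟩⟩)

end Cuts

section Boundary

variable {V E : Type*} [DecidableEq V] [Fintype E] (G : MultiGraph V E)

/-- The mod 2 boundary of an edge vector. Edge multisets are studied through their multiplicities
mod 2, so that a join with prescribed odd vertices is a vector with prescribed boundary. -/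
def boundary : (E → ZMod 2) →ₗ[ZMod 2] (V → ZMod 2) :=
  Fintype.linearCombination (ZMod 2) fun e => Pi.single (G.fst e) 1 + Pi.single (G.snd e) 1

lemma boundary_single [DecidableEq E] (e : E) :
    G.boundary (Pi.single e 1) = Pi.single (G.fst e) 1 + Pi.single (G.snd e) 1 := by
  rw [boundary, Fintype.linearCombination_apply_single, one_smul]

lemma sum_boundary (f : E → ZMod 2) (U : Finset V) :
    ∑ v ∈ U, G.boundary f v = ∑ e ∈ G.cut U, f e := by
  simp only [boundary, Fintype.linearCombination_apply, Finset.sum_apply, Pi.smul_apply,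
    Pi.add_apply, smul_eq_mul]
  rw [sum_comm, cut, sum_filter]
  refine sum_congr rfl fun e _ => ?_
  rw [← mul_sum, sum_add_distrib]
  by_cases hfst : G.fst e ∈ U <;> by_cases hsnd : G.snd e ∈ U <;>
    simp [Pi.single_apply, hfst, hsnd, CharTwo.add_self_eq_zero]

lemma exists_boundary_eq_of_reflTransGen {P : E → Prop} {u w : V}
    (h : Relation.ReflTransGen (G.Adj P) u w) :
    ∃ q : E → ZMod 2, (∀ e, q e ≠ 0 → P e) ∧ G.boundary q = Pi.single u 1 + Pi.single w 1 := by
  induction h with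
  | refl => exact ⟨0, by simp, by rw [map_zero, ZModModule.add_self]⟩
  | @tail v w _ hadj ih =>
    obtain ⟨q, hqP, hq⟩ := ih
    obtain ⟨e, he, hends⟩ := hadj
    have hsingle : G.boundary (Pi.single e 1) = Pi.single v 1 + Pi.single w 1 := by
      rw [boundary_single]
      rcases hends with ⟨rfl, rfl⟩ | ⟨rfl, rfl⟩
      · rfl
      · exact add_comm _ _
    refine ⟨q + Pi.single e 1, fun d hd => ?_, ?_⟩
    · by_cases hde : d = e
      · exact hde ▸ he
      · exact hqP d (by simpa [hde] using hd)
    · rw [map_add, hq, hsingle, ZModModule.add_add_add_cancel]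

lemma exists_closed_or_exists_cut [Finite V] {P : E → Prop} {e : E} (he : P e) (b : V) :
    (∃ q : E → ZMod 2, (∀ d, q d ≠ 0 → P d) ∧ G.boundary q = 0 ∧ q e ≠ 0) ∨
      ∃ W : Finset V, b ∉ W ∧ ∀ d, P d → (d ∈ G.cut W ↔ d = e) := by
  have := Fintype.ofFinite V
  set R := G.reachSet (fun d => P d ∧ d ≠ e) (G.fst e)
  have hfst : G.fst e ∈ R := G.mem_reachSet.2 .refl
  by_cases hsnd : G.snd e ∈ R
  · left
    obtain ⟨q, hqP, hq⟩ := G.exists_boundary_eq_of_reflTransGen (G.mem_reachSet.1 hsnd)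
    have hqe : q e = 0 := by_contra fun h => (hqP e h).2 rfl
    refine ⟨q + Pi.single e 1, fun d hd => ?_, ?_, by simp [hqe]⟩
    · by_cases hde : d = e
      · exact hde ▸ he
      · exact (hqP d (by simpa [hde] using hd)).1
    · rw [map_add, hq, boundary_single, ZModModule.add_self]
  · right
    have hcut : ∀ d, P d → (d ∈ G.cut R ↔ d = e) := fun d hd =>
      ⟨fun hdR => by_contra fun hne => G.not_of_mem_cut_reachSet hdR ⟨hd, hne⟩,
        fun hde => hde ▸ G.mem_cut.2 (.inl ⟨hfst, hsnd⟩)⟩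
    by_cases hb : b ∈ R
    · exact ⟨Rᶜ, by simpa using hb, by simpa only [cut_compl] using hcut⟩
    · exact ⟨R, hb, hcut⟩

lemma sum_single_one_apply (U : Finset V) (a : V) :
    ∑ v ∈ U, (Pi.single a 1 : V → ZMod 2) v = if a ∈ U then 1 else 0 := by
  simp [Pi.single_apply]

/- If every edge of `D` crossing `U` were a bridge of the subgraph `P`, two of them would cut off
sets `W` and `W'` that avoid `U` and contain `a`; no edge of `D` leaves `W ∩ W'`, although this set
contains exactly one of `a` and `b`. -/
lemma exists_closed_of_two_crossings [Finite V] {P : E → Prop} {D : E → ZMod 2} {a b : V}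
    {U : Finset V} (hDP : ∀ d, D d ≠ 0 → P d)
    (hD : G.boundary D = Pi.single a 1 + Pi.single b 1)
    (hU : ∀ v ∈ U, Relation.ReflTransGen (G.Adj fun d => P d ∧ d ∉ G.cut U) b v)
    {e e' : E} (hne : e ≠ e') (he : e ∈ G.cut U) (he' : e' ∈ G.cut U)
    (hDe : D e ≠ 0) (hDe' : D e' ≠ 0) :
    ∃ q : E → ZMod 2, (∀ d, q d ≠ 0 → P d) ∧ G.boundary q = 0 ∧ ∃ d ∈ G.cut U, q d ≠ 0 := by
  by_contra! hcon
  have parity_cut (W : Finset V) (hb : b ∉ W) :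
      ∑ d ∈ G.cut W, D d = if a ∈ W then 1 else 0 := by
    rw [← sum_boundary, hD]
    simp only [Pi.add_apply, sum_add_distrib, sum_single_one_apply, hb, if_false, add_zero]
  have bridge (d : E) (hd : d ∈ G.cut U) (hDd : D d ≠ 0) :
      ∃ W : Finset V, a ∈ W ∧ b ∉ W ∧ (∀ v ∈ U, v ∉ W) ∧
        ∀ d', P d' → (d' ∈ G.cut W ↔ d' = d) := by
    rcases G.exists_closed_or_exists_cut (hDP d hDd) b with ⟨q, hqP, hq, hqd⟩ | ⟨W, hb, hW⟩
    · exact absurd (hcon q hqP hq d hd) hqd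
    refine ⟨W, ?_, hb, fun v hv hvW => hb ?_, hW⟩
    · have hsum : ∑ d' ∈ G.cut W, D d' = D d :=
        sum_eq_single_of_mem d ((hW d (hDP d hDd)).2 rfl) fun d' hd' hne =>
          by_contra fun h => hne ((hW d' (hDP d' h)).1 hd')
      by_contra ha
      exact hDd (by rw [← hsum, parity_cut W hb, if_neg ha])
    · refine (G.mem_iff_mem_of_reflTransGen (fun d' hd' hmem => hd'.2 ?_) (hU v hv)).2 hvW
      rwa [(hW d' hd'.1).1 hmem]
  obtain ⟨W, ha, hb, hUW, hW⟩ := bridge e he hDe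
  obtain ⟨W', ha', -, hUW', hW'⟩ := bridge e' he' hDe'
  have hzero : ∀ d ∈ G.cut (W ∩ W'), D d = 0 := by
    intro d hd
    by_contra hDd
    have hdW := hW d (hDP d hDd)
    have hdW' := hW' d (hDP d hDd)
    simp only [mem_cut, mem_inter] at hd hdW hdW' he he'
    grind
  have hone := parity_cut (W ∩ W') fun h => hb (mem_inter.1 h).1
  rw [sum_eq_zero hzero, if_pos (mem_inter.2 ⟨ha, ha'⟩)] at hone
  exact zero_ne_one hone

end Boundary

section SupportCost

variable {E : Type*} [Fintype E]

/-- The cost of the edge set that a mod 2 edge vector represents, i.e. of its support. -/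
def supportCost (c : E → ℝ) (f : E → ZMod 2) : ℝ :=
  ∑ e, if f e = 0 then 0 else c e

lemma supportCost_nonneg {c : E → ℝ} (hc : ∀ e, 0 ≤ c e) (f : E → ZMod 2) :
    0 ≤ supportCost c f :=
  sum_nonneg fun e _ => by split_ifs <;> simp [hc e]

lemma le_supportCost {c : E → ℝ} (hc : ∀ e, 0 ≤ c e) {f : E → ZMod 2} {e : E} (he : f e ≠ 0) :
    c e ≤ supportCost c f := by
  refine le_of_eq_of_le (if_neg he).symm (single_le_sum
    (f := fun e => if f e = 0 then 0 else c e) (fun d _ => ?_) (mem_univ e))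
  split_ifs <;> simp [hc d]

lemma add_eq_zero_iff_ne_zero {a b : ZMod 2} (hb : b ≠ 0) : a + b = 0 ↔ a ≠ 0 := by
  decide +revert

lemma supportCost_add_add_supportCost_add {c : E → ℝ} {f g q : E → ZMod 2}
    (hq : ∀ e, q e ≠ 0 → f e + g e ≠ 0 ∨ c e = 0) :
    supportCost c (f + q) + supportCost c (g + q) = supportCost c f + supportCost c g := by
  simp only [supportCost, ← sum_add_distrib, Pi.add_apply]
  refine sum_congr rfl fun e _ => ?_
  by_cases hqe : q e = 0
  · simp only [hqe, add_zero]
  rcases hq e hqe with hfge | hce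
  · by_cases hge : g e = 0
    · have hfe : f e ≠ 0 := by rwa [hge, add_zero] at hfge
      simp only [add_eq_zero_iff_ne_zero hqe, hqe, hge, hfe, ne_eq, not_false_iff, if_true,
        if_false, zero_add, add_zero]
    · have hfe : f e = 0 := by rwa [ne_eq, add_eq_zero_iff_ne_zero hge, not_not] at hfge
      simp only [add_eq_zero_iff_ne_zero hqe, hqe, hge, hfe, ne_eq, not_false_iff, if_true,
        if_false, zero_add, add_zero]
  · simp only [hce, ite_self]

lemma supportCost_add_add_supportCost {c : E → ℝ} {f q : E → ZMod 2}
    (hq : ∀ e, q e ≠ 0 → f e ≠ 0 ∨ c e = 0) :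
    supportCost c (f + q) + supportCost c q = supportCost c f := by
  have hswap := supportCost_add_add_supportCost_add (g := 0) (by simpa using hq)
  simpa [supportCost] using hswap

end SupportCost

section MinJoin

variable {V E : Type*} [DecidableEq V] [Fintype E] (G : MultiGraph V E)

/-- `f` represents a cheapest edge set with boundary `t`: for `t` the indicator vector of `T`, a
minimum cost `T`-join. -/
def IsMinJoin (c : E → ℝ) (t : V → ZMod 2) (f : E → ZMod 2) : Prop :=
  G.boundary f = t ∧ ∀ h, G.boundary h = t → supportCost c f ≤ supportCost c h

/-- `g` is a cheapest vector among those whose boundary is `t` with the parities at some two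
vertices flipped; `a` and `b` are its two flipped vertices, and `a = b` is allowed. -/
def IsMinDefect (c : E → ℝ) (t : V → ZMod 2) (a b : V) (g : E → ZMod 2) : Prop :=
  G.boundary g = t + (Pi.single a 1 + Pi.single b 1) ∧
    ∀ a' b' h, G.boundary h = t + (Pi.single a' 1 + Pi.single b' 1) →
      supportCost c g ≤ supportCost c h

variable {G} {c : E → ℝ} {t : V → ZMod 2}

lemma exists_isMinJoin (c : E → ℝ) (ht : ∃ f, G.boundary f = t) : ∃ f, G.IsMinJoin c t f :=
  Set.exists_min_image {f | G.boundary f = t} (supportCost c) (Set.toFinite _) ht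

lemma exists_isMinDefect [Nonempty V] (c : E → ℝ) (ht : ∃ f, G.boundary f = t) :
    ∃ a b g, G.IsMinDefect c t a b g := by
  obtain ⟨f, hf⟩ := ht
  let v := Classical.arbitrary V
  obtain ⟨g, ⟨a, b, hg⟩, hmin⟩ := Set.exists_min_image
    {g | ∃ a b, G.boundary g = t + (Pi.single a 1 + Pi.single b 1)} (supportCost c)
    (Set.toFinite _) ⟨f, v, v, by rw [hf, ZModModule.add_self, add_zero]⟩
  exact ⟨a, b, g, hg, fun a' b' h hh => hmin h ⟨a', b', hh⟩⟩

namespace IsMinDefect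

variable {a b : V} {g : E → ZMod 2}

lemma supportCost_lt_of_isMinJoin (hg : G.IsMinDefect c t a b g) (hc : ∀ e, 0 ≤ c e)
    {f : E → ZMod 2} (hf : G.IsMinJoin c t f) (hpos : 0 < supportCost c f) :
    supportCost c g < supportCost c f := by
  obtain ⟨e, -, he⟩ := exists_ne_zero_of_sum_ne_zero hpos.ne'
  obtain ⟨hfe, hce⟩ : f e ≠ 0 ∧ c e ≠ 0 := by simpa using he
  have hcost := supportCost_add_add_supportCost (c := c) (f := f) (q := Pi.single e 1)
    fun d hd => .inl (by
      obtain rfl : d = e := by simpa [Pi.single_apply] using hd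
      exact hfe)
  have hle := hg.2 (G.fst e) (G.snd e) (f + Pi.single e 1) (by
    rw [map_add, hf.1, boundary_single])
  have hcut := le_supportCost hc (f := Pi.single e 1) (e := e) (by simp)
  linarith [(hc e).lt_of_ne' hce]

lemma supportCost_lt_of_crosses [Fintype V] (hg : G.IsMinDefect c t a b g) (hc : ∀ e, 0 ≤ c e)
    {h : E → ZMod 2} (hh : G.boundary h = t + (Pi.single a 1 + Pi.single b 1)) {e : E}
    (he : e ∈ G.cut (G.reachSet (fun d => c d = 0) b)) (hhe : h e ≠ 0) :
    supportCost c g < supportCost c h := by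
  have hce : 0 < c e := (hc e).lt_of_ne' (G.not_of_mem_cut_reachSet he)
  obtain ⟨u, w, hends, hu⟩ : ∃ u w, G.boundary (Pi.single e 1) = Pi.single u 1 + Pi.single w 1 ∧
      Relation.ReflTransGen (G.Adj fun d => c d = 0) b u := by
    simp only [mem_cut, mem_reachSet] at he
    rcases he with ⟨hfst, -⟩ | ⟨-, hsnd⟩
    · exact ⟨_, _, G.boundary_single e, hfst⟩
    · exact ⟨_, _, (G.boundary_single e).trans (add_comm _ _), hsnd⟩
  obtain ⟨ζ, hζ, hζb⟩ := G.exists_boundary_eq_of_reflTransGen hu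
  have hcost := supportCost_add_add_supportCost (c := c) (f := h) (q := ζ + Pi.single e 1)
    fun d hd => by
      by_cases hde : d = e
      · exact .inl (hde ▸ hhe)
      · exact .inr (hζ d (by simpa [hde] using hd))
  have hζe : ζ e = 0 := by_contra fun hne => hce.ne' (hζ e hne)
  have hle := hg.2 a w (h + (ζ + Pi.single e 1)) (by
    rw [map_add, map_add, hh, hζb, hends, ZModModule.add_add_add_cancel, add_assoc,
      ZModModule.add_add_add_cancel])
  have hedge := le_supportCost hc (f := ζ + Pi.single e 1) (e := e) (by simp [hζe])
  linarith

lemma notMem_reachSet [Fintype V] (hg : G.IsMinDefect c t a b g) (hc : ∀ e, 0 ≤ c e)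
    {f : E → ZMod 2} (hf : G.IsMinJoin c t f) (hlt : supportCost c g < supportCost c f) :
    a ∉ G.reachSet (fun d => c d = 0) b := by
  intro ha
  obtain ⟨ζ, hζ, hζb⟩ := G.exists_boundary_eq_of_reflTransGen (G.mem_reachSet.1 ha)
  have hcost := supportCost_add_add_supportCost (c := c) (f := g) fun e he => .inr (hζ e he)
  have hle := hf.2 (g + ζ) (by
    rw [map_add, hg.1, hζb, add_comm (Pi.single b 1), add_assoc, ZModModule.add_self, add_zero])
  linarith [supportCost_nonneg hc ζ]

/- Flipping a closed vector `q` supported on `f + g` and free edges preserves the total cost of `f`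
and `g`. If `q` crosses the cut, then `g + q` costs more than `g`, so `f + q` costs less than `f`.
-/
lemma card_crossing_le_one [Fintype V] (hg : G.IsMinDefect c t a b g) (hc : ∀ e, 0 ≤ c e)
    {f : E → ZMod 2} (hf : G.IsMinJoin c t f) :
    #{e ∈ G.cut (G.reachSet (fun d => c d = 0) b) | f e ≠ 0} ≤ 1 := by
  set U := G.reachSet (fun d => c d = 0) b
  by_contra! hcard
  obtain ⟨e, he, e', he', hne⟩ := one_lt_card.1 hcard
  rw [mem_filter] at he he'
  have hgU : ∀ d ∈ G.cut U, g d = 0 := fun d hd =>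
    by_contra fun hgd => (hg.supportCost_lt_of_crosses hc hg.1 hd hgd).false
  have hdiff : G.boundary (f + g) = Pi.single a 1 + Pi.single b 1 := by
    rw [map_add, hf.1, hg.1, ← add_assoc, ZModModule.add_self, zero_add]
  have hU : ∀ v ∈ U, Relation.ReflTransGen
      (G.Adj fun d => ((f + g) d ≠ 0 ∨ c d = 0) ∧ d ∉ G.cut U) b v := fun v hv =>
    Relation.ReflTransGen.mono (fun _ _ ⟨d, hd, hends⟩ =>
      ⟨d, ⟨.inr hd, fun hcut => G.not_of_mem_cut_reachSet hcut hd⟩, hends⟩) _ _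
      (G.mem_reachSet.1 hv)
  obtain ⟨q, hq, hq0, d, hd, hqd⟩ := G.exists_closed_of_two_crossings (fun d => .inl) hdiff hU hne
    he.1 he'.1 (by simpa [hgU e he.1] using he.2) (by simpa [hgU e' he'.1] using he'.2)
  have hswap := supportCost_add_add_supportCost_add hq
  have hfq := hf.2 (f + q) (by rw [map_add, hq0, add_zero, hf.1])
  have hgq := hg.supportCost_lt_of_crosses hc (h := g + q) (by rw [map_add, hq0, add_zero, hg.1])
    hd (by simpa [hgU d hd] using hqd)
  linarith

end IsMinDefect

lemma exists_cut_card_crossing_le_one [Finite V] (hc : ∀ e, 0 ≤ c e) {f₀ : E → ZMod 2}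
    (hf₀ : G.IsMinJoin c t f₀) (hpos : 0 < supportCost c f₀) :
    ∃ U : Finset V, ∑ v ∈ U, t v = 1 ∧ (∀ e ∈ G.cut U, 0 < c e) ∧
      ∀ f, G.IsMinJoin c t f → #{e ∈ G.cut U | f e ≠ 0} ≤ 1 := by
  have := Fintype.ofFinite V
  obtain ⟨e, -, -⟩ := exists_ne_zero_of_sum_ne_zero hpos.ne'
  have : Nonempty V := ⟨G.fst e⟩
  obtain ⟨a, b, g, hg⟩ := exists_isMinDefect c ⟨f₀, hf₀.1⟩
  set U := G.reachSet (fun d => c d = 0) b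
  have ha : a ∉ U := hg.notMem_reachSet hc hf₀ (hg.supportCost_lt_of_isMinJoin hc hf₀ hpos)
  have hb : b ∈ U := G.mem_reachSet.2 .refl
  refine ⟨U, ?_, fun e he => (hc e).lt_of_ne' (G.not_of_mem_cut_reachSet he),
    fun f hf => hg.card_crossing_le_one hc hf⟩
  have hgU : ∑ v ∈ U, G.boundary g v = 0 := by
    rw [sum_boundary]
    exact sum_eq_zero fun e he =>
      by_contra fun hge => (hg.supportCost_lt_of_crosses hc hg.1 he hge).false
  simp only [hg.1, Pi.add_apply, sum_add_distrib, sum_single_one_apply, ha, hb, if_false, if_true,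
    zero_add] at hgU
  exact CharTwo.add_eq_zero.1 hgU

end MinJoin

section IncidenceVector

variable {E : Type*} [DecidableEq E]

lemma chi_nonneg (D : Finset E) (e : E) : 0 ≤ chi D e := by
  rw [chi]
  positivity

lemma sum_chi (D C : Finset E) : ∑ e ∈ C, chi D e = #(D ∩ C) := by
  simp [chi, inter_comm]

lemma sum_chi_mul [Fintype E] (D : Finset E) (g : E → ℝ) :
    ∑ e, chi D e * g e = ∑ e ∈ D, g e := by
  simp only [chi, ite_mul, one_mul, zero_mul, sum_ite_mem, univ_inter]

end IncidenceVector

section TJoinPolyhedron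

open Filter Topology

variable {V E : Type*} [DecidableEq V] [Fintype E] {G : MultiGraph V E} {c : E → ℝ}
  {t : V → ZMod 2}

lemma supportCost_sub_smul_chi [DecidableEq E] (c : E → ℝ) (ε : ℝ) (D : Finset E) (f : E → ZMod 2) :
    supportCost (c - ε • chi D) f = supportCost c f - ε * #{e ∈ D | f e ≠ 0} := by
  rw [card_filter, Nat.cast_sum, ← sum_chi_mul, mul_sum]
  simp only [supportCost, ← sum_sub_distrib, Pi.sub_apply, Pi.smul_apply, smul_eq_mul]
  refine sum_congr rfl fun e _ => ?_
  by_cases hf : f e = 0 <;> simp [hf]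

lemma continuous_supportCost (f : E → ZMod 2) : Continuous fun c => supportCost c f := by
  refine continuous_finsetSum _ fun e _ => ?_
  split_ifs <;> fun_prop

lemma exists_cut_supportCost_add_le [Finite V] (hc : ∀ e, 0 ≤ c e) {f₀ : E → ZMod 2}
    (hf₀ : G.IsMinJoin c t f₀) (hpos : 0 < supportCost c f₀) :
    ∃ U : Finset V, ∃ ε > 0, ∑ v ∈ U, t v = 1 ∧ (∀ e ∈ G.cut U, ε ≤ c e) ∧
      ∀ f, G.boundary f = t →
        supportCost c f₀ + ε * #{e ∈ G.cut U | f e ≠ 0} ≤ supportCost c f + ε := by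
  obtain ⟨U, hU, hcut, hcard⟩ := exists_cut_card_crossing_le_one hc hf₀ hpos
  have hcost : ∀ᶠ ε in 𝓝[>] (0 : ℝ), ∀ e ∈ G.cut U, ε ≤ c e :=
    (eventually_all_finset _).2 fun e he =>
      ((eventually_lt_nhds (hcut e he)).filter_mono nhdsWithin_le_nhds).mono fun _ => le_of_lt
  have hjoin : ∀ᶠ ε in 𝓝[>] (0 : ℝ), ∀ f, G.boundary f = t →
      supportCost c f₀ + ε * #{e ∈ G.cut U | f e ≠ 0} ≤ supportCost c f + ε := by
    refine eventually_all.2 fun f => ?_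
    by_cases hf : G.IsMinJoin c t f
    · filter_upwards [self_mem_nhdsWithin] with ε (hε : 0 < ε) hft
      have hcross : (#{e ∈ G.cut U | f e ≠ 0} : ℝ) ≤ 1 := mod_cast hcard f hf
      exact add_le_add (hf₀.2 f hft) (mul_le_of_le_one_right hε.le hcross)
    · by_cases hft : G.boundary f = t
      · have hlt : supportCost c f₀ < supportCost c f := by
          by_contra! hle
          exact hf ⟨hft, fun h hh => hle.trans (hf₀.2 h hh)⟩
        have htend : Tendsto (fun ε : ℝ => supportCost c f₀ + ε * #{e ∈ G.cut U | f e ≠ 0})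
            (𝓝[>] 0) (𝓝 (supportCost c f₀)) :=
          (Continuous.tendsto' (by fun_prop) 0 _ (by simp)).mono_left nhdsWithin_le_nhds
        filter_upwards [htend.eventually_lt_const hlt, self_mem_nhdsWithin] with ε hle
          (hε : 0 < ε) _
        linarith
      · exact .of_forall fun _ h => absurd h hft
  obtain ⟨ε, hε, h₁, h₂⟩ := (eventually_mem_nhdsWithin.and (hcost.and hjoin)).exists
  exact ⟨U, ε, hε, hU, h₁, h₂⟩

variable (G) in
/-- The costs `c'` that remain of `c` after paying for a lower bound on the cost of joins: every
vector with boundary `t` costs at least `m` when the removed cost `c - c'` is charged to `z`. -/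
def residualCosts (c z : E → ℝ) (t : V → ZMod 2) (m : ℝ) : Set (E → ℝ) :=
  Set.Icc 0 c ∩ {c' | ∀ f, G.boundary f = t → m ≤ supportCost c' f + ∑ e, (c e - c' e) * z e}

lemma isCompact_residualCosts (c z : E → ℝ) (t : V → ZMod 2) (m : ℝ) :
    IsCompact (G.residualCosts c z t m) := by
  refine isCompact_Icc.inter_right ?_
  simp only [Set.ofPred_forall]
  refine isClosed_iInter fun f => isClosed_iInter fun _ => isClosed_le continuous_const ?_
  exact (continuous_supportCost f).add (by fun_prop)

lemma sub_smul_chi_mem_residualCosts [DecidableEq E] {z c' : E → ℝ} {m ε : ℝ}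
    {f₁ : E → ZMod 2} {D : Finset E}
    (hc' : c' ∈ G.residualCosts c z t m) (hf₁ : G.boundary f₁ = t) (hε : 0 ≤ ε)
    (hD : ∀ e ∈ D, ε ≤ c' e) (hzD : 1 ≤ ∑ e ∈ D, z e)
    (hcross : ∀ f, G.boundary f = t →
      supportCost c' f₁ + ε * #{e ∈ D | f e ≠ 0} ≤ supportCost c' f + ε) :
    c' - ε • chi D ∈ G.residualCosts c z t m := by
  have hcharge : ∑ e, (c e - (c' - ε • chi D) e) * z e =
      ∑ e, (c e - c' e) * z e + ε * ∑ e ∈ D, z e := by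
    rw [← sum_chi_mul D, mul_sum, ← sum_add_distrib]
    refine sum_congr rfl fun e _ => ?_
    simp only [Pi.sub_apply, Pi.smul_apply, smul_eq_mul]
    ring
  refine ⟨⟨fun e => ?_, fun e => ?_⟩, fun f hf => ?_⟩
  · by_cases he : e ∈ D
    · simpa [chi, he] using hD e he
    · simpa [chi, he] using hc'.1.1 e
  · exact (sub_le_self _ (mul_nonneg hε (chi_nonneg D e))).trans (hc'.1.2 e)
  · rw [supportCost_sub_smul_chi, hcharge]
    linarith [hc'.2 f₁ hf₁, hcross f hf, le_mul_of_one_le_right hε hzD]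

/- Edmonds and Johnson's theorem on the `T`-join polyhedron. Take a residual cost vector of minimal
sum. If its cheapest join had positive cost, lowering the costs along a cut that every cheapest join
crosses at most once would contradict minimality. -/
theorem exists_boundary_eq_supportCost_le [Finite V] {z : E → ℝ} (hc : ∀ e, 0 ≤ c e)
    (hz : ∀ e, 0 ≤ z e) (ht : ∃ f, G.boundary f = t)
    (hcut : ∀ U : Finset V, ∑ v ∈ U, t v = 1 → 1 ≤ ∑ e ∈ G.cut U, z e) :
    ∃ f, G.boundary f = t ∧ supportCost c f ≤ ∑ e, c e * z e := by
  obtain ⟨f₀, hf₀⟩ := exists_isMinJoin c ht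
  obtain ⟨c', hc', hmin⟩ := (G.isCompact_residualCosts c z t (supportCost c f₀)).exists_isMinOn
    ⟨c, ⟨hc, le_rfl⟩, fun f hf => by simpa using hf₀.2 f hf⟩
    (f := fun c' => ∑ e, c' e) (by fun_prop)
  obtain ⟨f₁, hf₁⟩ := exists_isMinJoin c' ht
  rcases (supportCost_nonneg hc'.1.1 f₁).eq_or_lt' with hzero | hpos
  · refine ⟨f₀, hf₀.1, (hc'.2 f₁ hf₁.1).trans ?_⟩
    rw [hzero, zero_add]
    gcongr with e
    · exact hz e
    · exact sub_le_self _ (hc'.1.1 e)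
  · obtain ⟨U, ε, hε, hU, hεc, hcross⟩ := exists_cut_supportCost_add_le hc'.1.1 hf₁ hpos
    have hle := hmin (sub_smul_chi_mem_residualCosts hc' hf₁.1 hε.le hεc (hcut U hU) hcross)
    have hsum : ∑ e, (c' - ε • chi (G.cut U)) e = ∑ e, c' e - ε * #(G.cut U) := by
      simp only [Pi.sub_apply, Pi.smul_apply, smul_eq_mul, sum_sub_distrib, ← mul_sum, sum_chi,
        inter_univ]
    have hne : (G.cut U).Nonempty := 
      nonempty_of_sum_ne_zero (zero_lt_one.trans_le (hcut U hU)).ne'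
    have hcard : (0 : ℝ) < #(G.cut U) := mod_cast card_pos.2 hne
    simp only [Set.mem_ofPred_eq, hsum] at hle
    linarith [mul_pos hε hcard]

end TJoinPolyhedron

section Parity

variable {α : Type*} [DecidableEq α]

/-- The multiplicities mod 2 of a multiset. -/
def parity (F : Multiset α) : α → ZMod 2 := fun a => F.count a

lemma parity_cons (a : α) (F : Multiset α) : parity (a ::ₘ F) = Pi.single a 1 + parity F := by
  ext b
  simp [parity, Multiset.count_cons, Pi.single_apply, add_comm]

lemma parity_add (F F' : Multiset α) : parity (F + F') = parity F + parity F' := by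
  ext a
  simp [parity]

lemma parity_val (D : Finset α) (a : α) : parity D.val a = if a ∈ D then 1 else 0 := by
  simp [parity, Multiset.count_eq_of_nodup D.nodup]

lemma parity_support [Fintype α] (f : α → ZMod 2) : parity ({a | f a ≠ 0} : Finset α).val = f := by
  ext a
  simp only [parity_val, mem_filter_univ]
  generalize f a = b
  decide +revert

lemma sum_parity_val (D C : Finset α) : ∑ a ∈ C, parity D.val a = #(D ∩ C) := by
  simp [parity_val, inter_comm]

end Parity

section Tours

variable {V E : Type*} [DecidableEq V] [Fintype E] [DecidableEq E] (G : MultiGraph V E)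

lemma boundary_parity (F : Multiset E) (v : V) :
    G.boundary (parity F) v = G.deg F v := by
  induction F using Multiset.induction_on with
  | empty => simp [deg, show parity (0 : Multiset E) = 0 from funext fun _ => by simp [parity]]
  | cons e F ih =>
    rw [parity_cons, map_add, boundary_single, Pi.add_apply, ih]
    simp [deg, Pi.single_apply, eq_comm]

variable {G} [Fintype V] {T : Finset V}

lemma oddVerts_eq_iff {F : Multiset E} :
    G.oddVerts F = T ↔ G.boundary (parity F) = parity T.val := by
  simp only [Finset.ext_iff, funext_iff, oddVerts, mem_filter_univ, boundary_parity, parity_val]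
  refine forall_congr' fun v => ?_
  by_cases hv : v ∈ T
  · simp [hv, ZMod.natCast_eq_one_iff_odd]
  · simp [hv, ZMod.natCast_eq_zero_iff_even]

theorem exists_isTTour_sum_le {c z : E → ℝ} {S J : Finset E} (hc : ∀ e, 0 ≤ c e)
    (hz : ∀ e, 0 ≤ z e) (hS : G.ConnectedOn (· ∈ S)) (hJ : G.oddVerts J.val = T)
    (hcut : ∀ U, Odd (#(S ∩ G.cut U) + #(J ∩ G.cut U)) → 1 ≤ ∑ e ∈ G.cut U, z e) :
    ∃ F : Multiset E, G.IsTTour T F ∧ (F.map c).sum ≤ ∑ e ∈ S, c e + ∑ e, c e * z e := by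
  obtain ⟨f, hf, hcost⟩ := exists_boundary_eq_supportCost_le (G := G) hc hz
    ⟨parity S.val + parity J.val, rfl⟩ fun U hU => hcut U (by
      simp only [sum_boundary, Pi.add_apply, sum_add_distrib, sum_parity_val] at hU
      exact ZMod.natCast_eq_one_iff_odd.1 (mod_cast hU))
  refine ⟨S.val + ({e | f e ≠ 0} : Finset E).val, ⟨fun u w => ?_, ?_⟩, ?_⟩
  · exact Relation.ReflTransGen.mono (fun _ _ ⟨e, he, hends⟩ =>
      ⟨e, Multiset.mem_add.2 (.inl he), hends⟩) _ _ (hS u w)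
  · rw [oddVerts_eq_iff, parity_add, parity_support, map_add, hf, map_add, ← add_assoc,
      ZModModule.add_self, zero_add, oddVerts_eq_iff.1 hJ]
  · rw [Multiset.map_add, Multiset.sum_add, sum_map_val, sum_map_val, sum_filter]
    simpa only [ite_not, supportCost] using add_le_add_right hcost _

end Tours

lemma exists_le_of_sum_mul_le {ι : Type*} [Fintype ι] {p K : ι → ℝ} {R : ℝ} (hp0 : ∀ i, 0 ≤ p i)
    (hpsum : ∑ i, p i = 1) (hR : ∑ i, p i * K i ≤ R) : ∃ i, p i ≠ 0 ∧ K i ≤ R := by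
  obtain ⟨i, -, hi⟩ := exists_ne_zero_of_sum_ne_zero (hpsum.trans_ne one_ne_zero)
  have hsum : ∑ i with p i ≠ 0, p i * K i ≤ ∑ i with p i ≠ 0, p i * R := by
    have hsupport (L : ι → ℝ) : ∑ i with p i ≠ 0, p i * L i = ∑ i, p i * L i :=
      sum_filter_of_ne fun i _ h => left_ne_zero_of_mul h
    rwa [hsupport K, hsupport fun _ => R, ← sum_mul, hpsum, one_mul]
  obtain ⟨j, hj, hle⟩ := exists_le_of_sum_le ⟨i, by simpa using hi⟩ hsum
  have hpj : p j ≠ 0 := by simpa using hj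
  exact ⟨j, hpj, le_of_mul_le_mul_left hle ((hp0 j).lt_of_ne' hpj)⟩

section NarrowCuts

variable {V E : Type*} [Fintype V] [DecidableEq V] [Fintype E]
  {G : MultiGraph V E} {x : E → ℝ} {C : Finset E}

lemma mem_narrowCuts : C ∈ G.narrowCuts x ↔ G.Narrow x C := by
  simp only [narrowCuts, mem_filter_univ]

variable [DecidableEq E] {p : Finset E → ℝ}

lemma IsCut.card_inter_pos (hC : G.IsCut C) {S : Finset E} (hS : G.ConnectedOn (· ∈ S)) :
    0 < #(S ∩ C) := by
  obtain ⟨U, hne, huniv, rfl⟩ := hC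
  obtain ⟨e, heS, heU⟩ := hS.exists_mem_cut hne huniv
  exact card_pos.2 ⟨e, mem_inter.2 ⟨heS, heU⟩⟩

lemma sum_mul_card_inter_le (hdom : ∀ e, ∑ S, p S * chi S e ≤ x e) (C : Finset E) :
    ∑ S, p S * #(S ∩ C) ≤ ∑ e ∈ C, x e := by
  simp only [← sum_chi, mul_sum]
  rw [sum_comm]
  exact sum_le_sum fun e _ => hdom e

lemma Narrow.sum_not_lonely_le (hC : G.Narrow x C) (hp0 : ∀ S, 0 ≤ p S)
    (hpsum : ∑ S, p S = 1) (hconn : ∀ S, p S ≠ 0 → G.ConnectedOn (· ∈ S))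
    (hdom : ∀ e, ∑ S, p S * chi S e ≤ x e) :
    ∑ S with ¬ G.Lonely x S C, p S ≤ ∑ e ∈ C, x e - 1 := by
  have hle (S : Finset E) : (if ¬ G.Lonely x S C then p S else 0) ≤ p S * #(S ∩ C) - p S := by
    by_cases hpS : p S = 0
    · simp [hpS]
    have hpos := hC.1.card_inter_pos (hconn S hpS)
    have hcard : ((if ¬ G.Lonely x S C then 1 else 0 : ℕ) : ℝ) + 1 ≤ #(S ∩ C) := by
      norm_cast
      by_cases hone : #(S ∩ C) = 1
      · simp [Lonely, hC, hone]
      · simp only [Lonely, hone, and_false, not_false_iff, if_true]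
        lia
    calc (if ¬ G.Lonely x S C then p S else 0)
        = p S * ((if ¬ G.Lonely x S C then 1 else 0 : ℕ) : ℝ) := by split_ifs <;> simp
      _ ≤ p S * (#(S ∩ C) - 1) := mul_le_mul_of_nonneg_left (by linarith) (hp0 S)
      _ = p S * #(S ∩ C) - p S := by ring
  calc ∑ S with ¬ G.Lonely x S C, p S
      = ∑ S, if ¬ G.Lonely x S C then p S else 0 := sum_filter ..
    _ ≤ ∑ S, (p S * #(S ∩ C) - p S) := sum_le_sum fun S _ => hle S
    _ = ∑ S, p S * #(S ∩ C) - 1 := by rw [sum_sub_distrib, hpsum]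
    _ ≤ ∑ e ∈ C, x e - 1 := sub_le_sub_right (sum_mul_card_inter_le hdom C) 1

lemma Narrow.vC_nonneg (hC : G.Narrow x C) (hp0 : ∀ S, 0 ≤ p S) (e : E) : 0 ≤ G.vC x p C e := by
  refine mul_nonneg (one_div_nonneg.2 (sub_nonneg.2 hC.2.le)) (sum_nonneg fun S _ => ?_)
  refine mul_nonneg ?_ (chi_nonneg _ e)
  split_ifs
  exacts [hp0 S, le_rfl]

lemma sum_vC (x : E → ℝ) (p : Finset E → ℝ) (C : Finset E) :
    ∑ e ∈ C, G.vC x p C e = (∑ S with G.Lonely x S C, p S) / (2 - ∑ e ∈ C, x e) := by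
  simp only [vC]
  rw [← mul_sum, one_div_mul_eq_div, sum_comm, sum_filter]
  congr 1
  refine sum_congr rfl fun S _ => ?_
  rw [← mul_sum, sum_chi, inter_assoc, inter_self]
  split_ifs with hS
  · simp [hS.2]
  · rw [zero_mul]

lemma Narrow.one_le_sum_vC (hC : G.Narrow x C) (hp0 : ∀ S, 0 ≤ p S)
    (hpsum : ∑ S, p S = 1) (hconn : ∀ S, p S ≠ 0 → G.ConnectedOn (· ∈ S))
    (hdom : ∀ e, ∑ S, p S * chi S e ≤ x e) : 1 ≤ ∑ e ∈ C, G.vC x p C e := by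
  rw [sum_vC, one_le_div (sub_pos.2 hC.2)]
  have hnot := hC.sum_not_lonely_le hp0 hpsum hconn hdom
  have htotal := sum_filter_add_sum_filter_not univ (fun S => G.Lonely x S C) p
  linarith

lemma sum_mul_sum_not_lonely_le {g : Finset E → ℝ} (hg : ∀ C, G.Narrow x C → 0 ≤ g C)
    (hp0 : ∀ S, 0 ≤ p S) (hpsum : ∑ S, p S = 1) (hconn : ∀ S, p S ≠ 0 → G.ConnectedOn (· ∈ S))
    (hdom : ∀ e, ∑ S, p S * chi S e ≤ x e) :
    ∑ S, p S * ∑ C ∈ G.narrowCuts x with ¬ G.Lonely x S C, g C ≤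
      ∑ C ∈ G.narrowCuts x, (∑ e ∈ C, x e - 1) * g C := by
  calc ∑ S, p S * ∑ C ∈ G.narrowCuts x with ¬ G.Lonely x S C, g C
      = ∑ C ∈ G.narrowCuts x, (∑ S with ¬ G.Lonely x S C, p S) * g C := by
        simp only [sum_filter, mul_sum, sum_mul]
        rw [sum_comm]
        simp only [mul_ite, ite_mul, mul_zero, zero_mul]
    _ ≤ ∑ C ∈ G.narrowCuts x, (∑ e ∈ C, x e - 1) * g C := sum_le_sum fun C hC => by
        have hnarrow := mem_narrowCuts.1 hC
        exact mul_le_mul_of_nonneg_right (hnarrow.sum_not_lonely_le hp0 hpsum hconn hdom)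
          (hg C hnarrow)

end NarrowCuts

section ParityCorrection

variable {V E : Type*}

/-- The part of the requirement `1` on a narrow cut `C` that `x / 2 + α * chi J` leaves uncovered
when `J` has a single edge in `C`. -/
noncomputable def shortfall (x : E → ℝ) (α : ℝ) (C : Finset E) : ℝ :=
  max (1 - (∑ e ∈ C, x e) / 2 - α) 0

lemma shortfall_nonneg (x : E → ℝ) (α : ℝ) (C : Finset E) : 0 ≤ shortfall x α C :=
  le_max_right _ _

variable [Fintype V] [DecidableEq V] [Fintype E] [DecidableEq E]
  {G : MultiGraph V E} {x : E → ℝ} {p : Finset E → ℝ} {α : ℝ}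

variable (G x p α) in
/-- A fractional join correcting the parities of a tree `S` with `T`-join `J`. The vector `x / 2`
suffices on cuts that are not narrow; on narrow cuts `α * chi J` and, where the tree has more than
one edge, a multiple of `v^C` are added. -/
noncomputable def parityCorrection (S J : Finset E) (e : E) : ℝ :=
  x e / 2 + α * chi J e +
    ∑ C ∈ G.narrowCuts x with ¬ G.Lonely x S C, shortfall x α C * G.vC x p C e

lemma parityCorrection_nonneg (hx0 : ∀ e, 0 ≤ x e) (hα : 0 ≤ α) (hp0 : ∀ S, 0 ≤ p S)
    (S J : Finset E) (e : E) : 0 ≤ G.parityCorrection x p α S J e := by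
  have hcorr : 0 ≤ ∑ C ∈ G.narrowCuts x with ¬ G.Lonely x S C,
      shortfall x α C * G.vC x p C e := sum_nonneg fun C hC =>
    mul_nonneg (shortfall_nonneg x α C)
      ((mem_narrowCuts.1 (mem_filter.1 hC).1).vC_nonneg hp0 e)
  have hchi := mul_nonneg hα (chi_nonneg J e)
  rw [parityCorrection]
  linarith [hx0 e]

lemma sum_parityCorrection (x : E → ℝ) (p : Finset E → ℝ) (α : ℝ) (S J D : Finset E) :
    ∑ e ∈ D, G.parityCorrection x p α S J e = (∑ e ∈ D, x e) / 2 + α * #(J ∩ D) +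
      ∑ C ∈ G.narrowCuts x with ¬ G.Lonely x S C, shortfall x α C * ∑ e ∈ D, G.vC x p C e := by
  simp only [parityCorrection, sum_add_distrib, ← sum_div, ← mul_sum, sum_chi]
  rw [sum_comm]
  simp only [mul_sum]

lemma one_le_sum_parityCorrection_of_narrow (hα : 0 ≤ α) (hp0 : ∀ S, 0 ≤ p S)
    (hpsum : ∑ S, p S = 1) (hconn : ∀ S, p S ≠ 0 → G.ConnectedOn (· ∈ S))
    (hdom : ∀ e, ∑ S, p S * chi S e ≤ x e) {S J C : Finset E} (hC : G.Narrow x C)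
    (hS : #(S ∩ C) ≠ 1) (hJ : 0 < #(J ∩ C)) :
    1 ≤ ∑ e ∈ C, G.parityCorrection x p α S J e := by
  have hJα : α ≤ α * #(J ∩ C) := le_mul_of_one_le_right hα (mod_cast hJ)
  have hsingle : shortfall x α C * ∑ e ∈ C, G.vC x p C e ≤
      ∑ C' ∈ G.narrowCuts x with ¬ G.Lonely x S C',
        shortfall x α C' * ∑ e ∈ C, G.vC x p C' e :=
    single_le_sum (f := fun C' => shortfall x α C' * ∑ e ∈ C, G.vC x p C' e)
      (fun C' hC' => mul_nonneg (shortfall_nonneg x α C') (sum_nonneg fun e _ =>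
        (mem_narrowCuts.1 (mem_filter.1 hC').1).vC_nonneg hp0 e))
      (mem_filter.2 ⟨mem_narrowCuts.2 hC, fun h => hS h.2⟩)
  have hvC : shortfall x α C ≤ shortfall x α C * ∑ e ∈ C, G.vC x p C e :=
    le_mul_of_one_le_right (shortfall_nonneg x α C) (hC.one_le_sum_vC hp0 hpsum hconn hdom)
  have hshort : 1 - (∑ e ∈ C, x e) / 2 - α ≤ shortfall x α C := le_max_left _ _
  rw [sum_parityCorrection]
  linarith

lemma one_le_sum_parityCorrection_of_two_le (hα : 0 ≤ α) (hp0 : ∀ S, 0 ≤ p S)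
    (S J : Finset E) {D : Finset E} (hD : 2 ≤ ∑ e ∈ D, x e) :
    1 ≤ ∑ e ∈ D, G.parityCorrection x p α S J e := by
  have hcorr : 0 ≤ ∑ C ∈ G.narrowCuts x with ¬ G.Lonely x S C,
      shortfall x α C * ∑ e ∈ D, G.vC x p C e := sum_nonneg fun C hC =>
    mul_nonneg (shortfall_nonneg x α C) (sum_nonneg fun e _ =>
      (mem_narrowCuts.1 (mem_filter.1 hC).1).vC_nonneg hp0 e)
  have hJ : 0 ≤ α * #(J ∩ D) := by positivity
  rw [sum_parityCorrection]
  linarith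

lemma odd_card_inter_cut_iff {T : Finset V} {J : Finset E} (hJ : G.oddVerts J.val = T)
    (U : Finset V) : Odd #(J ∩ G.cut U) ↔ Odd #(T ∩ U) := by
  rw [← ZMod.natCast_eq_one_iff_odd, ← ZMod.natCast_eq_one_iff_odd, ← sum_parity_val,
    ← sum_parity_val, ← sum_boundary, oddVerts_eq_iff.1 hJ]

lemma one_le_sum_cut_parityCorrection (hα : 0 ≤ α) (hp0 : ∀ S, 0 ≤ p S)
    (hpsum : ∑ S, p S = 1) (hconn : ∀ S, p S ≠ 0 → G.ConnectedOn (· ∈ S))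
    (hdom : ∀ e, ∑ S, p S * chi S e ≤ x e) {T : Finset V}
    (hcut : ∀ U : Finset V, U.Nonempty → U ≠ univ → Even #(T ∩ U) → 2 ≤ ∑ e ∈ G.cut U, x e)
    {S J : Finset E} (hJ : G.oddVerts J.val = T) {U : Finset V}
    (hodd : Odd (#(S ∩ G.cut U) + #(J ∩ G.cut U))) :
    1 ≤ ∑ e ∈ G.cut U, G.parityCorrection x p α S J e := by
  rcases le_or_gt 2 (∑ e ∈ G.cut U, x e) with hwide | hnarrow
  · exact one_le_sum_parityCorrection_of_two_le hα hp0 S J hwide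
  have hne : U.Nonempty := by
    rw [nonempty_iff_ne_empty]
    rintro rfl
    simp [cut_empty] at hodd
  have huniv : U ≠ univ := by
    rintro rfl
    simp [cut_univ] at hodd
  have hJodd : Odd #(J ∩ G.cut U) := by
    rw [odd_card_inter_cut_iff hJ, ← Nat.not_even_iff_odd]
    exact fun heven => hnarrow.not_ge (hcut U hne huniv heven)
  refine one_le_sum_parityCorrection_of_narrow hα hp0 hpsum hconn hdom
    ⟨⟨U, hne, huniv, rfl⟩, hnarrow⟩ (fun hS => ?_) hJodd.pos
  exact Nat.not_odd_iff_even.2 (odd_one.add_odd hJodd) (hS ▸ hodd)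

lemma sum_mul_chi_add_parityCorrection_le (hp0 : ∀ S, 0 ≤ p S) (hpsum : ∑ S, p S = 1)
    (hconn : ∀ S, p S ≠ 0 → G.ConnectedOn (· ∈ S)) (hdom : ∀ e, ∑ S, p S * chi S e ≤ x e)
    (I : Finset E → Finset E) (e : E) :
    ∑ S, p S * (chi S e + G.parityCorrection x p α S (I S) e) ≤
      3 / 2 * x e + α * ∑ S, p S * chi (I S) e +
        ∑ C ∈ G.narrowCuts x, (∑ f ∈ C, x f - 1) * (shortfall x α C * G.vC x p C e) := by
  have hcorr := sum_mul_sum_not_lonely_le (g := fun C => shortfall x α C * G.vC x p C e)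
    (fun C hC => mul_nonneg (shortfall_nonneg x α C) (hC.vC_nonneg hp0 e)) hp0 hpsum hconn hdom
  have hsplit : ∑ S, p S * (chi S e + G.parityCorrection x p α S (I S) e) =
      ∑ S, p S * chi S e + x e / 2 + α * ∑ S, p S * chi (I S) e + ∑ S, p S *
        ∑ C ∈ G.narrowCuts x with ¬ G.Lonely x S C, shortfall x α C * G.vC x p C e := by
    simp only [parityCorrection, mul_add, sum_add_distrib, ← sum_mul, hpsum, one_mul,
      mul_left_comm _ α, ← mul_sum, add_assoc]
  rw [hsplit]
  linarith [hdom e]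

lemma sum_mul_cost_le {c : E → ℝ} (hc : ∀ e, 0 ≤ c e) (hp0 : ∀ S, 0 ≤ p S)
    (hpsum : ∑ S, p S = 1) (hconn : ∀ S, p S ≠ 0 → G.ConnectedOn (· ∈ S))
    (hdom : ∀ e, ∑ S, p S * chi S e ≤ x e) (I : Finset E → Finset E) :
    ∑ S, p S * (∑ e ∈ S, c e + ∑ e, c e * G.parityCorrection x p α S (I S) e) ≤
      3 / 2 * (∑ e, c e * x e) + α * (∑ e, c e * ∑ S, p S * chi (I S) e) +
        ∑ C ∈ G.narrowCuts x, (∑ f ∈ C, x f - 1) * shortfall x α C *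
          ∑ e, c e * G.vC x p C e := by
  calc ∑ S, p S * (∑ e ∈ S, c e + ∑ e, c e * G.parityCorrection x p α S (I S) e)
      = ∑ e, c e * ∑ S, p S * (chi S e + G.parityCorrection x p α S (I S) e) := by
        simp only [← sum_chi_mul _ c, ← sum_add_distrib, mul_sum]
        rw [sum_comm]
        exact sum_congr rfl fun e _ => sum_congr rfl fun S _ => by ring
    _ ≤ ∑ e, c e * (3 / 2 * x e + α * ∑ S, p S * chi (I S) e +
          ∑ C ∈ G.narrowCuts x, (∑ f ∈ C, x f - 1) * (shortfall x α C * G.vC x p C e)) := by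
        gcongr with e
        · exact hc e
        · exact sum_mul_chi_add_parityCorrection_le hp0 hpsum hconn hdom I e
    _ = _ := by
        simp only [mul_add, sum_add_distrib, mul_left_comm (c _), mul_assoc, ← mul_sum]
        congr 1
        simp only [mul_sum]
        rw [sum_comm]
        exact sum_congr rfl fun C _ => sum_congr rfl fun e _ => by ring

end ParityCorrection

variable {V E : Type*} [Fintype V] [DecidableEq V] [Fintype E] [DecidableEq E]

theorem bomc_bound_general (G : MultiGraph V E) (T : Finset V) (c : E → ℝ) (hc : ∀ e, 0 ≤ c e)
    (x : E → ℝ)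
    (hx : ∀ U : Finset V, U.Nonempty → U ≠ univ → Even #(T ∩ U) → 2 ≤ ∑ e ∈ G.cut U, x e)
    (p : Finset E → ℝ) (hp0 : ∀ S, 0 ≤ p S) (hpsum : ∑ S : Finset E, p S = 1)
    (hconn : ∀ S, p S ≠ 0 → G.ConnectedOn (· ∈ S))
    (hdom : ∀ e, ∑ S : Finset E, p S * chi S e ≤ x e)
    (I : Finset E → Finset E) (hI : ∀ S, p S ≠ 0 → G.oddVerts (I S).val = T)
    (α : ℝ) (hα : 0 ≤ α) :
    ∃ F : Multiset E, G.IsTTour T F ∧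
      (F.map c).sum ≤
        (3 / 2 : ℝ) * (∑ e, c e * x e) +
        α * (∑ e, c e * ∑ S : Finset E, p S * chi (I S) e) +
        ∑ C ∈ G.narrowCuts x,
          ((∑ f ∈ C, x f) - 1) * max (1 - (∑ f ∈ C, x f) / 2 - α) 0 *
            (∑ e, c e * G.vC x p C e) := by
  obtain ⟨S, hpS, hS⟩ := exists_le_of_sum_mul_le hp0 hpsum
    (sum_mul_cost_le (α := α) hc hp0 hpsum hconn hdom I)
  have hx0 (e : E) : 0 ≤ x e :=
    (sum_nonneg fun S _ => mul_nonneg (hp0 S) (chi_nonneg S e)).trans (hdom e)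
  obtain ⟨F, hF, hcost⟩ := exists_isTTour_sum_le hc
    (parityCorrection_nonneg hx0 hα hp0 S (I S)) (hconn S hpS) (hI S hpS)
    fun _ => one_le_sum_cut_parityCorrection hα hp0 hpsum hconn hdom hx (hI S hpS)
  exact ⟨F, hF, hcost.trans hS⟩

/-- For every `α ≥ 0` there is a `T`-tour of cost at most
`(3/2)c(x*) + α·c(I_p) + Σ_{C ∈ 𝒩} (x*(C) − 1)·max{1 − x*(C)/2 − α, 0}·c(v^C)`. -/
theorem bomc_bound (G : MultiGraph V E) (hG : G.Connected)
    (T : Finset V) (hT : Even T.card) (c : E → ℝ) (hc : ∀ e, 0 ≤ c e)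
    (x : E → ℝ) (hx : G.LPFeasible T x)
    (p : Finset E → ℝ) (hp0 : ∀ S, 0 ≤ p S)
    (hptree : ∀ S, p S ≠ 0 → G.IsSpanningTree S)
    (hpsum : ∑ S : Finset E, p S = 1)
    (hdom : ∀ e, ∑ S : Finset E, p S * chi S e ≤ x e)
    (I : Finset E → Finset E)
    (hI : ∀ S, p S ≠ 0 → I S ⊆ S ∧ G.oddVerts (I S).val = T)
    (α : ℝ) (hα : 0 ≤ α) :
    ∃ F : Multiset E, G.IsTTour T F ∧
      (F.map c).sum ≤
        (3 / 2 : ℝ) * (∑ e, c e * x e) +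
        α * (∑ e, c e * ∑ S : Finset E, p S * chi (I S) e) +
        ∑ C ∈ G.narrowCuts x,
          ((∑ f ∈ C, x f) - 1) * max (1 - (∑ f ∈ C, x f) / 2 - α) 0 *
            (∑ e, c e * G.vC x p C e) :=
  G.bomc_bound_general T c hc x hx.2.1 p hp0 hpsum (fun S hS => (hptree S hS).1) hdom I
    (fun S hS => (hI S hS).2) α hα

end MultiGraph
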